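/- arXiv:1411.2919 — 2 statements merged into one kernel-verified Lean document; each statement's English description precedes it below -/
import Mathlib

section
/- Consider the two-armed structured bandit with Θ = ℝ, μ_1(θ) = θ and μ_2(θ) = −θ, where rewards are normally distributed with unit variance. Then for every θ > 0 and every bandit algorithm, for all sufficiently large n, max{E_{−θ} R_n(−θ), E_θ R_n(θ)} ≥ 1/(8θ). -/
open MeasureTheory ProbabilityTheory

namespace TwoArmedBandit

/-- A (deterministic, history-dependent) algorithm for a two-armed bandit: `choose t h` is the
arm played at round `t + 1` given the vector `h` of rewards observed in the first `t` rounds. -/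
structure Alg where
  choose : (t : ℕ) → (Fin t → ℝ) → Fin 2
  measurable_choose : ∀ t, Measurable (choose t)

/-- The canonical trajectory space: `ω t` is the reward received at round `t + 1`. -/
abbrev Traj : Type := ℕ → ℝ

/-- The arm played at round `t ∈ {1, 2, …}` on trajectory `ω`. -/
def armAt (alg : Alg) (t : ℕ) (ω : Traj) : Fin 2 :=
  alg.choose (t - 1) fun i => ω i.val

/-- `IsEnv μ alg P` asserts that for every `θ`, `P θ` is the law of the reward sequence
obtained when the algorithm `alg` interacts with the two-armed bandit environment in which arm
`i` yields independent `N(μ i θ, 1)`-distributed rewards: each `P θ` is a probability measure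
and, conditionally on the first `t` rewards, the reward at round `t + 1` is Gaussian with unit
variance and mean `μ i θ` where `i` is the arm chosen by the algorithm at round `t + 1`. -/
def IsEnv {Θ : Type*} (μ : Fin 2 → Θ → ℝ) (alg : Alg) (P : Θ → Measure Traj) : Prop :=
  (∀ θ, IsProbabilityMeasure (P θ)) ∧
  ∀ θ (t : ℕ) (f : (Fin (t + 1) → ℝ) → ℝ), Measurable f → (∃ C, ∀ x, |f x| ≤ C) →
    ∫ ω, f (fun i => ω i.val) ∂(P θ) =
      ∫ ω, ∫ x, f (Fin.snoc (fun i : Fin t => ω i.val) x)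
        ∂(gaussianReal (μ (alg.choose t fun i => ω i.val) θ) 1) ∂(P θ)

/-- The cumulative regret over the first `n` rounds on trajectory `ω`, under parameter `θ`. -/
noncomputable def regret {Θ : Type*} (μ : Fin 2 → Θ → ℝ) (alg : Alg) (θ : Θ) (n : ℕ)
    (ω : Traj) : ℝ :=
  ∑ t ∈ Finset.Icc 1 n, (max (μ 0 θ) (μ 1 θ) - μ (armAt alg t ω) θ)

/-- The expected cumulative regret `E_θ R_n(θ)`. -/
noncomputable def expRegret {Θ : Type*} (μ : Fin 2 → Θ → ℝ) (alg : Alg)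
    (P : Θ → Measure Traj) (θ : Θ) (n : ℕ) : ℝ :=
  ∫ ω, regret μ alg θ n ω ∂(P θ)

open scoped ENNReal

/-- The mean functions of the symmetric linear bandit. -/
abbrev mu : Fin 2 → ℝ → ℝ := fun i θ => if i = 0 then θ else -θ

/-- The first `t` rewards. -/
def hist (t : ℕ) (ω : Traj) : Fin t → ℝ := fun i => ω i.val

lemma measurable_hist (t : ℕ) : Measurable (hist t) := by
  unfold hist
  fun_prop

lemma measurable_snoc (t : ℕ) :
    Measurable (fun p : (Fin t → ℝ) × ℝ => (Fin.snoc p.1 p.2 : Fin (t + 1) → ℝ)) := by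
  rw [measurable_pi_iff]
  intro i
  refine Fin.lastCases ?_ (fun j => ?_) i
  · simpa using measurable_snd
  · simp only [Fin.snoc_castSucc]
    exact (measurable_pi_apply j).comp measurable_fst

/-- The mean at the next round. -/
def nextMean (alg : Alg) (θ : ℝ) (t : ℕ) (h : Fin t → ℝ) : ℝ := mu (alg.choose t h) θ

lemma measurable_nextMean (alg : Alg) (θ : ℝ) (t : ℕ) : Measurable (nextMean alg θ t) :=
  (measurable_of_countable (fun i : Fin 2 => mu i θ)).comp (alg.measurable_choose t)

lemma map_step (alg : Alg) (P : ℝ → Measure Traj) (hEnv : IsEnv mu alg P) (θ : ℝ) (t : ℕ) :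
    (P θ).map (hist (t + 1)) = ((P θ).prod (gaussianReal 0 1)).map
      (fun p => (Fin.snoc (hist t p.1) (p.2 + nextMean alg θ t (hist t p.1)) :
        Fin (t + 1) → ℝ)) := by
  have := hEnv.1 θ
  have hm : Measurable (fun p : Traj × ℝ =>
      (Fin.snoc (hist t p.1) (p.2 + nextMean alg θ t (hist t p.1)) : Fin (t + 1) → ℝ)) := by
    have h1 : Measurable (fun p : Traj × ℝ => hist t p.1) :=
      (measurable_hist t).comp measurable_fst
    exact (measurable_snoc t).comp
      (h1.prodMk (measurable_snd.add ((measurable_nextMean alg θ t).comp h1)))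
  have : IsProbabilityMeasure ((P θ).map (hist (t + 1))) :=
    Measure.isProbabilityMeasure_map (measurable_hist _).aemeasurable
  have := Measure.isProbabilityMeasure_map (μ := (P θ).prod (gaussianReal 0 1)) hm.aemeasurable
  refine Measure.ext fun s hs => ?_
  rw [← ENNReal.toReal_eq_toReal_iff' (measure_ne_top _ _) (measure_ne_top _ _)]
  simp only [← measureReal_def]
  have key := hEnv.2 θ t (s.indicator (fun _ => 1)) (measurable_const.indicator hs)
    ⟨1, fun x => by by_cases hx : x ∈ s <;> simp [hx]⟩
  have e1 : ((P θ).map (hist (t + 1))).real s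
      = ∫ ω, s.indicator (fun _ => (1 : ℝ)) (hist (t + 1) ω) ∂(P θ) := by
    rw [← integral_map (measurable_hist _).aemeasurable
      (measurable_const.indicator hs).aestronglyMeasurable, integral_indicator_const _ hs]
    simp
  have e2 : (((P θ).prod (gaussianReal 0 1)).map (fun p : Traj × ℝ =>
      (Fin.snoc (hist t p.1) (p.2 + nextMean alg θ t (hist t p.1)) : Fin (t + 1) → ℝ))).real s
      = ∫ ω, ∫ x, s.indicator (fun _ => (1 : ℝ)) (Fin.snoc (hist t ω) x)
        ∂(gaussianReal (nextMean alg θ t (hist t ω)) 1) ∂(P θ) := by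
    have : ∀ ω, ∫ x, s.indicator (fun _ => (1 : ℝ)) (Fin.snoc (hist t ω) x)
        ∂(gaussianReal (nextMean alg θ t (hist t ω)) 1) =
        ∫ x, s.indicator (fun _ => (1 : ℝ))
          (Fin.snoc (hist t ω) (x + nextMean alg θ t (hist t ω))) ∂(gaussianReal 0 1) := by
      intro ω
      have hg := gaussianReal_map_add_const (μ := 0) (v := 1) (nextMean alg θ t (hist t ω))
      rw [zero_add] at hg
      rw [← hg, integral_map (by fun_prop)]
      refine Measurable.aestronglyMeasurable ?_
      have hsn : Measurable (fun x : ℝ => (Fin.snoc (hist t ω) x : Fin (t + 1) → ℝ)) :=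
        (measurable_snoc t).comp ((measurable_const (a := hist t ω)).prodMk measurable_id)
      exact (measurable_const.indicator hs).comp hsn
    simp_rw [this]
    have hi := integral_prod (μ := P θ) (ν := gaussianReal 0 1) (fun p : Traj × ℝ =>
      s.indicator (fun _ => (1 : ℝ))
        (Fin.snoc (hist t p.1) (p.2 + nextMean alg θ t (hist t p.1)) : Fin (t + 1) → ℝ)) ?_
    · rw [← hi, ← integral_map hm.aemeasurable
        (measurable_const.indicator hs).aestronglyMeasurable, integral_indicator_const _ hs]
      simp
    · refine Integrable.of_bound
        ((measurable_const.indicator hs).comp hm).aestronglyMeasurable 1 (ae_of_all _ fun p => ?_)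
      simp only [Set.indicator]
      split_ifs <;> simp
  rw [e1, e2]
  exact key

lemma lintegral_step (alg : Alg) (P : ℝ → Measure Traj) (hEnv : IsEnv mu alg P) (θ : ℝ) (t : ℕ)
    (f : (Fin (t + 1) → ℝ) → ℝ≥0∞) (hf : Measurable f) :
    ∫⁻ ω, f (hist (t + 1) ω) ∂(P θ) =
      ∫⁻ ω, ∫⁻ x, f (Fin.snoc (hist t ω) (x + nextMean alg θ t (hist t ω)))
        ∂(gaussianReal 0 1) ∂(P θ) := by
  have hm : Measurable (fun p : Traj × ℝ =>
      (Fin.snoc (hist t p.1) (p.2 + nextMean alg θ t (hist t p.1)) : Fin (t + 1) → ℝ)) := by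
    have h1 : Measurable (fun p : Traj × ℝ => hist t p.1) :=
      (measurable_hist t).comp measurable_fst
    exact (measurable_snoc t).comp
      (h1.prodMk (measurable_snd.add ((measurable_nextMean alg θ t).comp h1)))
  have := hEnv.1 θ
  rw [← lintegral_map hf (measurable_hist _), map_step alg P hEnv, lintegral_map hf hm]
  exact lintegral_prod _ (hf.comp hm).aemeasurable

lemma lintegral_shift (a : ℝ) (g : ℝ → ℝ≥0∞) (hg : Measurable g) :
    ∫⁻ x, g (x + a) ∂(gaussianReal 0 1) =
      ∫⁻ x, g x * ENNReal.ofReal (Real.exp (a * x - a ^ 2 / 2)) ∂(gaussianReal 0 1) := by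
  have hh := gaussianReal_map_add_const (μ := 0) (v := 1) a
  rw [zero_add] at hh
  have hma : Measurable (fun x : ℝ => x + a) := by fun_prop
  rw [← lintegral_map (μ := gaussianReal 0 1) hg hma]
  rw [hh, gaussianReal_of_var_ne_zero _ one_ne_zero, gaussianReal_of_var_ne_zero _ one_ne_zero,
    lintegral_withDensity_eq_lintegral_mul _ (measurable_gaussianPDF _ _) hg,
    lintegral_withDensity_eq_lintegral_mul _ (measurable_gaussianPDF _ _)
      (g := fun x => g x * ENNReal.ofReal (Real.exp (a * x - a ^ 2 / 2)))
      (hg.mul (by fun_prop))]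
  refine lintegral_congr fun x => ?_
  simp only [Pi.mul_apply, gaussianPDF]
  rw [mul_comm (g x), ← mul_assoc, ← ENNReal.ofReal_mul (gaussianPDFReal_nonneg _ _ _)]
  congr 2
  simp only [gaussianPDFReal]
  rw [mul_assoc _ (Real.exp _) (Real.exp _), ← Real.exp_add]
  congr 2
  simp
  ring

/-- The signed sum of the rewards. -/
def S (alg : Alg) : (t : ℕ) → (Fin t → ℝ) → ℝ
  | 0, _ => 0
  | t + 1, h => S alg t (fun i => h i.castSucc) +
      nextMean alg 1 t (fun i => h i.castSucc) * h (Fin.last t)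

lemma measurable_S (alg : Alg) : ∀ t, Measurable (S alg t)
  | 0 => measurable_const
  | t + 1 => by
    have h1 : Measurable (fun h : Fin (t + 1) → ℝ => (fun i : Fin t => h i.castSucc)) := by
      fun_prop
    exact ((measurable_S alg t).comp h1).add
      (((measurable_nextMean alg 1 t).comp h1).mul (measurable_pi_apply _))

/-- The likelihood ratio with respect to parameter `0`. -/
noncomputable def L (alg : Alg) (θ : ℝ) (t : ℕ) (h : Fin t → ℝ) : ℝ :=
  Real.exp (θ * S alg t h - t * θ ^ 2 / 2)

lemma measurable_L (alg : Alg) (θ : ℝ) (t : ℕ) : Measurable (L alg θ t) :=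
  Real.measurable_exp.comp (((measurable_S alg t).const_mul θ).sub_const _)

lemma L_succ (alg : Alg) (θ : ℝ) (t : ℕ) (h : Fin t → ℝ) (x : ℝ) :
    L alg θ (t + 1) (Fin.snoc h x) =
      L alg θ t h * Real.exp (nextMean alg θ t h * x - (nextMean alg θ t h) ^ 2 / 2) := by
  unfold L
  rw [← Real.exp_add]
  congr 1
  simp only [S, Fin.snoc_castSucc, Fin.snoc_last]
  unfold nextMean mu
  push_cast
  split_ifs <;> ring

lemma nextMean_zero (alg : Alg) (t : ℕ) (h : Fin t → ℝ) : nextMean alg 0 t h = 0 := by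
  simp [nextMean]

lemma change_measure (alg : Alg) (P : ℝ → Measure Traj) (hEnv : IsEnv mu alg P) (θ : ℝ) :
    ∀ (t : ℕ) (f : (Fin t → ℝ) → ℝ≥0∞), Measurable f →
    ∫⁻ ω, f (hist t ω) ∂(P θ) =
      ∫⁻ ω, f (hist t ω) * ENNReal.ofReal (L alg θ t (hist t ω)) ∂(P 0) := by
  intro t
  induction t with
  | zero =>
    intro f hf
    have := hEnv.1 θ
    have := hEnv.1 0
    have : ∀ ω, hist 0 ω = Fin.elim0 := fun ω => Subsingleton.elim _ _
    simp [this, L, S]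
  | succ t ih =>
    intro f hf
    have hsn : ∀ h : Fin t → ℝ, Measurable (fun x : ℝ => (Fin.snoc h x : Fin (t + 1) → ℝ)) :=
      fun h => (measurable_snoc t).comp (measurable_const.prodMk measurable_id)
    have hL : Measurable (fun h => f h * ENNReal.ofReal (L alg θ (t + 1) h)) :=
      hf.mul (measurable_L alg θ (t + 1)).ennreal_ofReal
    rw [lintegral_step alg P hEnv θ t f hf, lintegral_step alg P hEnv 0 t _ hL]
    have hmeas : Measurable (fun h : Fin t → ℝ =>
        ∫⁻ x, f (Fin.snoc h (x + nextMean alg θ t h)) ∂(gaussianReal 0 1)) := by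
      refine Measurable.lintegral_prod_right' (f := fun p : (Fin t → ℝ) × ℝ =>
        f (Fin.snoc p.1 (p.2 + nextMean alg θ t p.1))) ?_
      exact hf.comp ((measurable_snoc t).comp (measurable_fst.prodMk
        (measurable_snd.add ((measurable_nextMean alg θ t).comp measurable_fst))))
    rw [ih _ hmeas]
    refine lintegral_congr fun ω => ?_
    rw [lintegral_shift _ (fun x => f (Fin.snoc (hist t ω) x)) (hf.comp (hsn _)), mul_comm,
      ← lintegral_const_mul]
    · refine lintegral_congr fun x => ?_
      rw [nextMean_zero, add_zero, L_succ,
        ENNReal.ofReal_mul (show 0 ≤ L alg θ t (hist t ω) from (Real.exp_pos _).le)]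
      ring
    · exact (hf.comp (hsn _)).mul (by fun_prop)

lemma amgm (a b k : ℝ) (ha : 0 < a) (hk : 0 < k) (hab : a * b = k ^ 2) :
    k ^ 2 ≤ a + (k / 2) ^ 2 * b := by
  have h : a * (k ^ 2) ≤ a * (a + (k / 2) ^ 2 * b) := by
    have : a * (a + (k / 2) ^ 2 * b) = a ^ 2 + (k / 2) ^ 2 * (a * b) := by ring
    rw [this, hab]
    nlinarith [sq_nonneg (a - k ^ 2 / 2)]
  exact le_of_mul_le_mul_left h ha

lemma two_point (alg : Alg) (P : ℝ → Measure Traj) (hEnv : IsEnv mu alg P) (θ : ℝ) (t : ℕ) :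
    Real.exp (-θ ^ 2) ^ t / 2 ≤
      (P θ).real {ω | alg.choose t (hist t ω) = 1} +
      (P (-θ)).real {ω | alg.choose t (hist t ω) = 0} := by
  have := hEnv.1 θ
  have := hEnv.1 (-θ)
  have := hEnv.1 0
  set k : ℝ := Real.exp (-(t * θ ^ 2 / 2)) with hkdef
  have hk : 0 < k := Real.exp_pos _
  have hk2 : Real.exp (-θ ^ 2) ^ t = k ^ 2 := by
    rw [hkdef, ← Real.exp_nat_mul, ← Real.exp_nat_mul]
    congr 1
    push_cast
    ring
  set A : Fin 2 → Set (Fin t → ℝ) := fun j => {h | alg.choose t h = j} with hA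
  have hAm : ∀ j, MeasurableSet (A j) := fun j =>
    alg.measurable_choose t (measurableSet_singleton j)
  set c : ℝ≥0∞ := ENNReal.ofReal ((k / 2) ^ 2) with hc
  -- integrands
  have hf : ∀ j, Measurable (fun h => (A j).indicator (fun _ => (1 : ℝ≥0∞)) h + c) :=
    fun j => (measurable_const.indicator (hAm j)).add_const c
  have hint : ∀ (j : Fin 2) (η : ℝ), IsProbabilityMeasure (P η) →
      ∫⁻ ω, ((A j).indicator (fun _ => (1 : ℝ≥0∞)) (hist t ω) + c) ∂(P η)
        = P η {ω | alg.choose t (hist t ω) = j} + c := by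
    intro j η _
    rw [lintegral_add_right _ measurable_const, lintegral_const, measure_univ, mul_one]
    congr 1
    have : (fun ω => (A j).indicator (fun _ => (1 : ℝ≥0∞)) (hist t ω))
        = {ω | alg.choose t (hist t ω) = j}.indicator 1 := by
      funext ω
      simp [hA, Set.indicator]
    rw [this, lintegral_indicator_one]
    exact (measurable_hist t) (hAm j)
  have e1 := hint 1 θ inferInstance
  have e0 := hint 0 (-θ) inferInstance
  rw [change_measure alg P hEnv θ t _ (hf 1)] at e1
  rw [change_measure alg P hEnv (-θ) t _ (hf 0)] at e0
  have hle : ENNReal.ofReal (k ^ 2) ≤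
      (P θ {ω | alg.choose t (hist t ω) = 1} + c)
        + (P (-θ) {ω | alg.choose t (hist t ω) = 0} + c) := by
    rw [← e1, ← e0, ← lintegral_add_left]
    · calc ENNReal.ofReal (k ^ 2) = ∫⁻ _, ENNReal.ofReal (k ^ 2) ∂(P 0) := by simp
        _ ≤ _ := by
          refine lintegral_mono fun ω => ?_
          have hp : 0 < L alg θ t (hist t ω) := Real.exp_pos _
          have hq : 0 < L alg (-θ) t (hist t ω) := Real.exp_pos _
          have hpq : L alg θ t (hist t ω) * L alg (-θ) t (hist t ω) = k ^ 2 := by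
            rw [hkdef, L, L, ← Real.exp_add, ← Real.exp_nat_mul]
            congr 1
            push_cast
            ring
          generalize L alg θ t (hist t ω) = p at *
          generalize L alg (-θ) t (hist t ω) = q at *
          have hj : alg.choose t (hist t ω) = 0 ∨ alg.choose t (hist t ω) = 1 := by
            generalize alg.choose t (hist t ω) = j
            fin_cases j <;> simp
          have hc0 : 0 ≤ (k / 2) ^ 2 := sq_nonneg _
          rcases hj with hj | hj
          · simp only [hA, Set.indicator, Set.mem_ofPred_eq, hj]
            simp only [zero_ne_one, if_false, if_true, zero_add, hc]
            rw [← ENNReal.ofReal_one, ← ENNReal.ofReal_add zero_le_one hc0,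
              ← ENNReal.ofReal_mul hc0, ← ENNReal.ofReal_mul (by positivity),
              ← ENNReal.ofReal_add (by positivity) (by positivity)]
            refine ENNReal.ofReal_le_ofReal ?_
            have := amgm q p k hq hk (by linarith)
            nlinarith [mul_nonneg hc0 hq.le]
          · simp only [hA, Set.indicator, Set.mem_ofPred_eq, hj]
            simp only [one_ne_zero, if_false, if_true, zero_add, hc]
            rw [← ENNReal.ofReal_one, ← ENNReal.ofReal_add zero_le_one hc0,
              ← ENNReal.ofReal_mul hc0, ← ENNReal.ofReal_mul (by positivity),
              ← ENNReal.ofReal_add (by positivity) (by positivity)]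
            refine ENNReal.ofReal_le_ofReal ?_
            have := amgm p q k hp hk hpq
            nlinarith [mul_nonneg hc0 hp.le]
    · exact ((hf 1).comp (measurable_hist t)).mul
        ((measurable_L alg θ t).comp (measurable_hist t)).ennreal_ofReal
  rw [hk2]
  have hr := ENNReal.toReal_mono (by simp [hc]) hle
  rw [ENNReal.toReal_ofReal (by positivity), ENNReal.toReal_add (by simp [hc]) (by simp [hc]),
    ENNReal.toReal_add (by simp) (by simp [hc]), ENNReal.toReal_add (by simp) (by simp [hc]), hc,
    ENNReal.toReal_ofReal (by positivity)] at hr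
  simp only [measureReal_def]
  nlinarith

/-- Expected regret when arm `j` is the bad one. -/
lemma expRegret_eq (alg : Alg) (P : ℝ → Measure Traj) (hEnv : IsEnv mu alg P) (η d : ℝ)
    (j : Fin 2)
    (hd : ∀ i, max (mu 0 η) (mu 1 η) - mu i η = if i = j then d else 0) (n : ℕ) :
    expRegret mu alg P η n =
      ∑ t ∈ Finset.range n, d * (P η).real {ω | alg.choose t (hist t ω) = j} := by
  have := hEnv.1 η
  have hms : ∀ t, MeasurableSet {ω : Traj | alg.choose t (hist t ω) = j} := fun t =>
    measurable_hist t (alg.measurable_choose t (measurableSet_singleton j))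
  have hreg : ∀ ω, regret mu alg η n ω = ∑ t ∈ Finset.range n,
      {ω : Traj | alg.choose t (hist t ω) = j}.indicator (fun _ => d) ω := by
    intro ω
    unfold regret
    rw [← Finset.Ico_add_one_right_eq_Icc, Finset.sum_Ico_eq_sum_range]
    refine Finset.sum_congr (by simp) fun t _ => ?_
    rw [hd]
    have : armAt alg (1 + t) ω = alg.choose t (hist t ω) := by
      rw [add_comm]
      rfl
    rw [this]
    simp [Set.indicator]
  unfold expRegret
  simp_rw [hreg]
  rw [integral_finsetSum]
  · refine Finset.sum_congr rfl fun t _ => ?_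
    rw [integral_indicator_const _ (hms t)]
    simp [mul_comm]
  · intro t _
    exact (integrable_const d).indicator (hms t)

/-- **Lower bound for the bandit of Figure 3(a).** For the two-armed structured bandit with
`Θ = ℝ`, `μ₁(θ) = θ`, `μ₂(θ) = −θ` and unit-variance normal rewards, for every `θ > 0` and
every algorithm, `max{E_{−θ} R_n(−θ), E_θ R_n(θ)} ≥ 1/(8θ)` for all sufficiently large `n`. -/
theorem lower_bound_symmetric_linear
    (alg : Alg) (P : ℝ → Measure Traj)
    (hEnv : IsEnv (fun i θ => if i = 0 then θ else -θ) alg P)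
    (θ : ℝ) (hθ : 0 < θ) :
    ∃ N : ℕ, ∀ n : ℕ, N ≤ n →
      1 / (8 * θ) ≤
        max (expRegret (fun i θ => if i = 0 then θ else -θ) alg P (-θ) n)
            (expRegret (fun i θ => if i = 0 then θ else -θ) alg P θ n) := by
  have hr1 : Real.exp (-θ ^ 2) < 1 := by
    rw [Real.exp_lt_one_iff]
    nlinarith [sq_pos_of_pos hθ]
  have hsum := (hasSum_geometric_of_lt_one (Real.exp_pos (-θ ^ 2)).le hr1).tendsto_sum_nat
  have hlim : 1 / (4 * θ ^ 2) < (1 - Real.exp (-θ ^ 2))⁻¹ := by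
    rw [← one_div]
    have := Real.add_one_le_exp (-θ ^ 2)
    apply one_div_lt_one_div_of_lt (by linarith)
    nlinarith [sq_pos_of_pos hθ]
  obtain ⟨N, hN⟩ := Filter.eventually_atTop.1 (hsum.eventually (lt_mem_nhds hlim))
  refine ⟨N, fun n hn => ?_⟩
  have h1 := hN n hn
  have ea := expRegret_eq alg P hEnv θ (2 * θ) 1 (by
    intro i
    have : max θ (-θ) = θ := max_eq_left (by linarith)
    fin_cases i <;> simp [mu, this]
    ring) n
  have eb := expRegret_eq alg P hEnv (-θ) (2 * θ) 0 (by
    intro i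
    have : max (-θ) θ = θ := max_eq_right (by linarith)
    fin_cases i <;> simp [mu, this]
    ring) n
  have hge : θ * ∑ t ∈ Finset.range n, Real.exp (-θ ^ 2) ^ t ≤
      expRegret mu alg P θ n + expRegret mu alg P (-θ) n := by
    rw [ea, eb, ← Finset.sum_add_distrib, Finset.mul_sum]
    refine Finset.sum_le_sum fun t _ => ?_
    have := mul_le_mul_of_nonneg_left (two_point alg P hEnv θ t) (by linarith : 0 ≤ 2 * θ)
    linarith
  have h2 : 2 * (1 / (8 * θ)) ≤ expRegret mu alg P θ n + expRegret mu alg P (-θ) n := by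
    refine le_trans ?_ hge
    refine le_trans (le_of_eq ?_) (mul_le_mul_of_nonneg_left h1.le hθ.le)
    field_simp
    norm_num
  change _ ≤ max (expRegret mu alg P (-θ) n) (expRegret mu alg P θ n)
  rcases le_total (expRegret mu alg P (-θ) n) (expRegret mu alg P θ n) with h | h
  · rw [max_eq_right h]
    linarith
  · rw [max_eq_left h]
    linarith

end TwoArmedBandit
end

section
/- Consider the two-armed structured bandit with Θ = [−1, 1], μ_1(θ) = −θ·1{θ > 0}, μ_2(θ) = −1{θ ≤ 0}, where rewards are normally distributed with unit variance. There exists an algorithm and a constant C such that for all n: if θ > 0 then E_θ R_n(θ) ≤ C·(1/θ)·log log(1/θ) (for θ bounded away from 1, i.e. in the O-sense as θ → 0), and if θ ≤ 0 then E_θ R_n(θ) ≤ C, uniformly in n. -/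
open MeasureTheory ProbabilityTheory

namespace TwoArmedBandit

/-- The mean functions of the bandit of Figure 4(a): `Θ = [−1,1]`,
`μ₁(θ) = −θ·1{θ > 0}` and `μ₂(θ) = −1{θ ≤ 0}`. -/
noncomputable def muAmb : Fin 2 → ℝ → ℝ := fun i θ =>
  if i = 0 then (if 0 < θ then -θ else 0) else (if θ ≤ 0 then -1 else 0)


/-- Discrete part of the state: mode (`true` = testing arm 0), phase, number of plays. -/
abbrev DState : Type := Bool × ℕ × ℕ

abbrev St : Type := DState × ℝ

/-- log-confidence of phase `k` -/
noncomputable def ell (k : ℕ) : ℝ := Real.log ((k : ℝ) * (k + 1))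

noncomputable def bb (k : ℕ) : ℝ := √(2 * 2 ^ k * ell k)

noncomputable def step (s : St) (x : ℝ) : St :=
  if s.1.1 = true then
    (if s.1.2.2 + 1 < 2 ^ s.1.2.1 then ((true, s.1.2.1, s.1.2.2 + 1), s.2 + x)
    else if s.2 + x ≤ - bb s.1.2.1 then ((false, s.1.2.1, 0), 2)
    else ((true, s.1.2.1 + 1, 0), 0))
  else
    (if s.2 + x + 1 / 2 ≤ 0 then ((true, s.1.2.1 + 1, 0), 0)
    else ((false, s.1.2.1, 0), s.2 + x + 1 / 2))

def arm (s : St) : Fin 2 := if s.1.1 = true then 0 else 1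

def initSt : St := ((true, 1, 0), 0)

def Inv (s : St) : Prop :=
  1 ≤ s.1.2.1 ∧ (s.1.1 = true → s.1.2.2 < 2 ^ s.1.2.1) ∧ (s.1.1 = false → 0 < s.2)

lemma inv_step (s : St) (x : ℝ) (h : Inv s) : Inv (step s x) := by
  obtain ⟨⟨m, k, j⟩, y⟩ := s
  obtain ⟨h1, h2, h3⟩ := h
  unfold step Inv
  simp only at h1 h2 h3 ⊢
  split_ifs <;> simp_all

lemma measurable_of_slices {β : Type*} [MeasurableSpace β] (f : St → β)
    (h : ∀ d, Measurable fun y => f (d, y)) : Measurable f :=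
  measurable_from_prod_countable_right h

lemma measurable_step : Measurable fun p : St × ℝ => step p.1 p.2 := by
  have key : Measurable fun p : DState × (ℝ × ℝ) => step (p.1, p.2.1) p.2.2 := by
    apply measurable_from_prod_countable_right
    rintro ⟨m, k, j⟩
    unfold step
    simp only
    cases m
    · simp only [Bool.false_eq_true, if_false]
      refine Measurable.ite (measurableSet_le (by fun_prop) (by fun_prop)) (by fun_prop)
        (by fun_prop)
    · simp only [if_true]
      split_ifs
      · fun_prop
      · refine Measurable.ite (measurableSet_le (by fun_prop) (by fun_prop)) (by fun_prop)
          (by fun_prop)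
  exact key.comp MeasurableEquiv.prodAssoc.measurable

noncomputable def run : (t : ℕ) → (Fin t → ℝ) → St
  | 0, _ => initSt
  | t + 1, h => step (run t fun i => h i.castSucc) (h (Fin.last t))

lemma measurable_run : ∀ t, Measurable (run t)
  | 0 => measurable_const
  | t + 1 => by
    have h1 : Measurable fun h : Fin (t + 1) → ℝ => fun i : Fin t => h i.castSucc := by
      apply measurable_pi_lambda
      intro i
      exact measurable_pi_apply _
    have h2 := measurable_step.comp
      (((measurable_run t).comp h1).prodMk (measurable_pi_apply (Fin.last t)))
    exact h2

lemma inv_run : ∀ t h, Inv (run t h)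
  | 0, _ => by simp [run, initSt, Inv]
  | t + 1, h => inv_step _ _ (inv_run t _)

lemma measurable_arm : Measurable arm := by
  apply measurable_of_slices
  intro d
  exact measurable_const (a := if d.1 = true then (0 : Fin 2) else 1)

noncomputable def theAlg : Alg where
  choose t h := arm (run t h)
  measurable_choose t := measurable_arm.comp (measurable_run t)

/-- One-step inequality for the environment with nonnegative functions. -/
lemma env_le {P : ℝ → Measure Traj} {alg : Alg} (hP : IsEnv muAmb alg P) (θ : ℝ) (t : ℕ)
    (g : (Fin (t + 1) → ℝ) → ℝ) (hg : Measurable g) (hg0 : ∀ x, 0 ≤ g x) :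
    ∫⁻ ω, ENNReal.ofReal (g (fun i => ω i.val)) ∂(P θ) ≤
      ∫⁻ ω, ∫⁻ x, ENNReal.ofReal (g (Fin.snoc (fun i : Fin t => ω i.val) x))
        ∂(gaussianReal (muAmb (alg.choose t fun i => ω i.val) θ) 1) ∂(P θ) := by
  have := hP.1 θ
  have hres : ∀ t : ℕ, Measurable fun (ω : Traj) (i : Fin t) => ω i.val := fun t =>
    measurable_pi_lambda _ fun i => measurable_pi_apply _
  have hsnoc : Measurable fun p : Traj × ℝ =>
      (Fin.snoc (fun i : Fin t => p.1 i.val) p.2 : Fin (t + 1) → ℝ) := by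
    apply measurable_pi_lambda
    intro i
    refine Fin.lastCases ?_ (fun i => ?_) i
    · simpa using measurable_snd
    · have h : Measurable fun p : Traj × ℝ => p.1 i.val :=
        (measurable_pi_apply (i : ℕ)).comp measurable_fst
      simpa using h
  have trunc : ∀ N : ℕ, ∫⁻ ω, ENNReal.ofReal (min (g (fun i => ω i.val)) N) ∂(P θ) ≤
      ∫⁻ ω, ∫⁻ x, ENNReal.ofReal (g (Fin.snoc (fun i : Fin t => ω i.val) x))
        ∂(gaussianReal (muAmb (alg.choose t fun i => ω i.val) θ) 1) ∂(P θ) := by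
    intro N
    set f : (Fin (t + 1) → ℝ) → ℝ := fun x => min (g x) N with hf
    have hfm : Measurable f := hg.min measurable_const
    have hf0 : ∀ x, 0 ≤ f x := fun x => le_min (hg0 x) (Nat.cast_nonneg N)
    have hfN : ∀ x, f x ≤ N := fun x => min_le_right _ _
    have hfb : ∀ x, |f x| ≤ N := fun x => by rw [abs_of_nonneg (hf0 x)]; exact hfN x
    have h := hP.2 θ t f hfm ⟨N, hfb⟩
    have hint : Integrable (fun ω : Traj => f (fun i => ω i.val)) (P θ) :=
      Integrable.of_bound (hfm.comp (hres _)).aestronglyMeasurable (N : ℝ)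
        (ae_of_all _ fun ω => hfb _)
    have hinti : ∀ (ω : Traj) (m : ℝ), Integrable
        (fun x => f (Fin.snoc (fun i : Fin t => ω i.val) x)) (gaussianReal m 1) := fun ω m =>
      Integrable.of_bound ((hfm.comp hsnoc).comp measurable_prodMk_left).aestronglyMeasurable
        (N : ℝ) (ae_of_all _ fun x => hfb _)
    have hmi : ∀ m : ℝ, Measurable fun ω : Traj =>
        ∫ x, f (Fin.snoc (fun i : Fin t => ω i.val) x) ∂(gaussianReal m 1) := fun m =>
      ((hfm.comp hsnoc).stronglyMeasurable.integral_prod_right').measurable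
    have hmeas : Measurable fun ω : Traj =>
        ∫ x, f (Fin.snoc (fun i : Fin t => ω i.val) x)
          ∂(gaussianReal (muAmb (alg.choose t fun i => ω i.val) θ) 1) := by
      have : (fun ω : Traj => ∫ x, f (Fin.snoc (fun i : Fin t => ω i.val) x)
          ∂(gaussianReal (muAmb (alg.choose t fun i => ω i.val) θ) 1)) =
          fun ω => if (alg.choose t fun i => ω i.val) = 0 then
            ∫ x, f (Fin.snoc (fun i : Fin t => ω i.val) x) ∂(gaussianReal (muAmb 0 θ) 1)
            else ∫ x, f (Fin.snoc (fun i : Fin t => ω i.val) x)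
              ∂(gaussianReal (muAmb 1 θ) 1) := by
        funext ω
        split_ifs with h0
        · rw [h0]
        · have h1 : (alg.choose t fun i => ω i.val) = 1 := by omega
          rw [h1]
      rw [this]
      refine Measurable.ite ?_ (hmi _) (hmi _)
      exact ((alg.measurable_choose t).comp (hres t)) (measurableSet_singleton (0 : Fin 2))
    have hint2 : Integrable (fun ω : Traj =>
        ∫ x, f (Fin.snoc (fun i : Fin t => ω i.val) x)
          ∂(gaussianReal (muAmb (alg.choose t fun i => ω i.val) θ) 1)) (P θ) := by
      refine Integrable.of_bound hmeas.aestronglyMeasurable (N : ℝ) (ae_of_all _ fun ω => ?_)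
      refine (norm_integral_le_of_norm_le_const (C := (N : ℝ))
        (ae_of_all _ fun x => hfb _)).trans ?_
      simp
    rw [← ofReal_integral_eq_lintegral_ofReal hint (ae_of_all _ fun ω => hf0 _), h,
      ofReal_integral_eq_lintegral_ofReal hint2
        (ae_of_all _ fun ω => integral_nonneg fun x => hf0 _)]
    apply lintegral_mono
    intro ω
    simp only
    rw [ofReal_integral_eq_lintegral_ofReal (hinti ω _) (ae_of_all _ fun ω => hf0 _)]
    apply lintegral_mono
    intro x
    exact ENNReal.ofReal_le_ofReal (min_le_left _ _)
  have hsup : ∀ ω : Traj, ENNReal.ofReal (g (fun i => ω i.val)) ≤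
      ⨆ N : ℕ, ENNReal.ofReal (min (g (fun i => ω i.val)) N) := by
    intro ω
    obtain ⟨N, hN⟩ := exists_nat_ge (g (fun i => ω i.val))
    refine le_iSup_of_le N ?_
    rw [min_eq_left hN]
  refine (lintegral_mono hsup).trans ?_
  rw [lintegral_iSup]
  · exact iSup_le trunc
  · intro N
    exact ((hg.comp (hres _)).min measurable_const).ennreal_ofReal
  · intro N M hNM ω
    exact ENNReal.ofReal_le_ofReal (min_le_min_left _ (by exact_mod_cast hNM))

lemma lintegral_exp_gauss (m A B l : ℝ) (hA : 0 ≤ A) (hB : 0 ≤ B) :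
    ∫⁻ x, ENNReal.ofReal (A + B * Real.exp (l * x)) ∂(gaussianReal m 1) =
      ENNReal.ofReal (A + B * Real.exp (m * l + l ^ 2 / 2)) := by
  have hi : Integrable (fun x => Real.exp (l * x)) (gaussianReal m 1) :=
    integrable_exp_mul_gaussianReal l
  rw [← ofReal_integral_eq_lintegral_ofReal]
  · congr 1
    rw [integral_add (integrable_const _) (hi.const_mul _), integral_const_mul]
    have := congrFun (mgf_id_gaussianReal (μ := m) (v := 1)) l
    simp only [mgf, id] at this
    rw [this]
    simp
  · exact (integrable_const _).add (hi.const_mul _)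
  · exact ae_of_all _ fun x => by positivity

/-- The immediate regret in a state. -/
noncomputable def cost (θ : ℝ) (s : St) : ℝ := max (muAmb 0 θ) (muAmb 1 θ) - muAmb (arm s) θ

lemma cost_nonneg (θ : ℝ) (s : St) : 0 ≤ cost θ s := by
  unfold cost arm
  split_ifs <;> simp

lemma measurable_cost (θ : ℝ) : Measurable (cost θ) := by
  apply measurable_of_slices
  intro d
  exact measurable_const (a := max (muAmb 0 θ) (muAmb 1 θ) -
    muAmb (if d.1 = true then (0 : Fin 2) else 1) θ)

/-- Lyapunov bound. -/
lemma lyapunov {P : ℝ → Measure Traj} (hP : IsEnv muAmb theAlg P) (θ : ℝ)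
    (V : St → ℝ) (hV : Measurable V) (hV0 : ∀ s, Inv s → 0 ≤ V s)
    (hstep : ∀ s, Inv s → ∃ A B l : ℝ, 0 ≤ A ∧ 0 ≤ B ∧
      (∀ x, V (step s x) ≤ A + B * Real.exp (l * x)) ∧
      cost θ s + (A + B * Real.exp (muAmb (arm s) θ * l + l ^ 2 / 2)) ≤ V s) (n : ℕ) :
    expRegret muAmb theAlg P θ n ≤ V initSt := by
  have := hP.1 θ
  have hres : ∀ t : ℕ, Measurable fun (ω : Traj) (i : Fin t) => ω i.val := fun t =>
    measurable_pi_lambda _ fun i => measurable_pi_apply _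
  have hreg : ∀ n ω, regret muAmb theAlg θ n ω =
      ∑ t ∈ Finset.range n, cost θ (run t fun i => ω i.val) := by
    intro n ω
    unfold regret
    induction n with
    | zero => simp
    | succ n ih =>
      rw [Finset.sum_Icc_succ_top (by omega), ih, Finset.sum_range_succ]
      rfl
  have hind : ∀ n, (∑ t ∈ Finset.range n,
      ∫⁻ ω, ENNReal.ofReal (cost θ (run t fun i => ω i.val)) ∂(P θ)) +
      ∫⁻ ω, ENNReal.ofReal (V (run n fun i => ω i.val)) ∂(P θ) ≤
      ENNReal.ofReal (V initSt) := by
    intro n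
    induction n with
    | zero => simp [run]
    | succ n ih =>
      refine le_trans ?_ ih
      rw [Finset.sum_range_succ, add_assoc]
      gcongr
      have h1 := env_le hP θ n (fun h => V (run (n + 1) h)) (hV.comp (measurable_run _))
        (fun _ => hV0 _ (inv_run _ _))
      refine (add_le_add_right h1 _).trans ?_
      have hm : Measurable fun ω : Traj =>
          ENNReal.ofReal (cost θ (run n fun i => ω i.val)) :=
        ((measurable_cost θ).comp ((measurable_run n).comp (hres n))).ennreal_ofReal
      rw [← lintegral_add_left hm]
      apply lintegral_mono
      intro ω
      simp only
      obtain ⟨A, B, l, hA, hB, hx, hle⟩ := hstep _ (inv_run n fun i => ω i.val)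
      refine le_trans (add_le_add_right (lintegral_mono (g := fun x =>
        ENNReal.ofReal (A + B * Real.exp (l * x))) fun x => ?_) _) ?_
      · apply ENNReal.ofReal_le_ofReal
        have : run (n + 1) (Fin.snoc (fun i : Fin n => ω i.val) x) =
            step (run n fun i => ω i.val) x := by
          simp [run]
        rw [this]
        exact hx x
      · rw [lintegral_exp_gauss _ _ _ _ hA hB, ← ENNReal.ofReal_add (cost_nonneg _ _)
          (by positivity)]
        exact ENNReal.ofReal_le_ofReal hle
  have hci : ∀ t, Integrable (fun ω : Traj => cost θ (run t fun i => ω i.val)) (P θ) := by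
    intro t
    refine Integrable.of_bound
      ((measurable_cost θ).comp ((measurable_run t).comp (hres t))).aestronglyMeasurable
      (cost θ ((true, 0, 0), 0) + cost θ ((false, 0, 0), 0)) (ae_of_all _ fun ω => ?_)
    rw [Real.norm_of_nonneg (cost_nonneg _ _)]
    have h1 := cost_nonneg θ ((true, 0, 0), 0)
    have h2 := cost_nonneg θ ((false, 0, 0), 0)
    generalize run t (fun i => ω i.val) = s
    obtain ⟨⟨m, k, j⟩, y⟩ := s
    cases m <;> simp_all [cost, arm]
  unfold expRegret
  simp_rw [hreg]
  rw [integral_finsetSum _ fun t _ => hci t]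
  have h2 := (le_self_add).trans (hind n)
  rw [← ENNReal.ofReal_le_ofReal_iff (hV0 initSt (inv_run 0 0)),
    ENNReal.ofReal_sum_of_nonneg (fun t _ => integral_nonneg fun ω => cost_nonneg _ _)]
  refine le_trans (le_of_eq ?_) h2
  refine Finset.sum_congr rfl fun t _ => ?_
  exact ofReal_integral_eq_lintegral_ofReal (hci t) (ae_of_all _ fun ω => cost_nonneg _ _)

lemma ell_nonneg (k : ℕ) : 0 ≤ ell k := by
  have : (k : ℝ) * (k + 1) = ((k * (k + 1) : ℕ) : ℝ) := by push_cast; ring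
  unfold ell
  rw [this]
  exact Real.log_natCast_nonneg _

lemma exp_neg_ell (k : ℕ) (hk : 1 ≤ k) : Real.exp (-ell k) = 1 / ((k : ℝ) * (k + 1)) := by
  have : (0 : ℝ) < k := by exact_mod_cast hk
  unfold ell
  rw [Real.exp_neg, Real.exp_log (by positivity), one_div]

noncomputable def lam (k : ℕ) : ℝ := √(2 * ell k / 2 ^ k)

lemma lam_nonneg (k : ℕ) : 0 ≤ lam k := Real.sqrt_nonneg _

lemma lam_sq (k : ℕ) : lam k ^ 2 * 2 ^ k = 2 * ell k := by
  have := ell_nonneg k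
  unfold lam
  rw [Real.sq_sqrt (by positivity)]
  field_simp

lemma lam_bb (k : ℕ) : lam k * bb k = 2 * ell k := by
  have := ell_nonneg k
  unfold lam bb
  rw [← Real.sqrt_mul (by positivity)]
  have h : 2 * ell k / 2 ^ k * (2 * 2 ^ k * ell k) = (2 * ell k) ^ 2 := by
    field_simp
  rw [h, Real.sqrt_sq (by positivity)]

/-- Potential for `θ ≤ 0`. -/
noncomputable def Vneg (s : St) : ℝ :=
  if s.1.1 = true then
    9 * Real.exp 1 * Real.exp (-lam s.1.2.1 * (s.2 + bb s.1.2.1) +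
      lam s.1.2.1 ^ 2 * (2 ^ s.1.2.1 - s.1.2.2) / 2) + 9 * Real.exp 1 / (s.1.2.1 + 1)
  else 9 * Real.exp (s.2 / 2) + 9 * Real.exp 1 / (s.1.2.1 + 1)

lemma Vneg_start (k : ℕ) (hk : 1 ≤ k) : Vneg ((true, k, 0), 0) = 9 * Real.exp 1 / k := by
  have h0 : (0 : ℝ) < k := by exact_mod_cast hk
  have h : -lam k * (0 + bb k) + lam k ^ 2 * (2 ^ k - ((0 : ℕ) : ℝ)) / 2 = -ell k := by
    have h1 := lam_sq k
    have h2 := lam_bb k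
    push_cast
    linarith
  simp only [Vneg, if_true]
  rw [h, exp_neg_ell k hk]
  field_simp
  ring

lemma measurable_Vneg : Measurable Vneg := by
  apply measurable_of_slices
  rintro ⟨m, k, j⟩
  cases m <;> simp only [Vneg] <;> norm_num <;> fun_prop

lemma Vneg_nonneg (s : St) : 0 ≤ Vneg s := by
  unfold Vneg
  split_ifs <;> positivity

lemma Vneg_step (θ : ℝ) (hθ : θ ≤ 0) (s : St) (hs : Inv s) : ∃ A B l : ℝ, 0 ≤ A ∧ 0 ≤ B ∧
      (∀ x, Vneg (step s x) ≤ A + B * Real.exp (l * x)) ∧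
      cost θ s + (A + B * Real.exp (muAmb (arm s) θ * l + l ^ 2 / 2)) ≤ Vneg s := by
  obtain ⟨⟨m, k, j⟩, y⟩ := s
  obtain ⟨h1, h2, h3⟩ := hs
  simp only at h1 h2 h3
  have hst : ((k + 1 : ℕ) : ℝ) = (k : ℝ) + 1 := by push_cast; ring
  cases m
  · have hy := h3 rfl
    refine ⟨9 * Real.exp 1 / (k + 1), 9 * Real.exp ((y + 1 / 2) / 2), 1 / 2, by positivity,
      by positivity, fun x => ?_, ?_⟩
    · have he : 9 * Real.exp ((y + 1 / 2) / 2) * Real.exp (1 / 2 * x) =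
          9 * Real.exp ((y + x + 1 / 2) / 2) := by
        rw [mul_assoc, ← Real.exp_add]; congr 2; ring
      rw [he]
      simp only [step, Bool.false_eq_true, if_false]
      split_ifs with h
      · rw [Vneg_start _ (by omega), hst]
        have := Real.exp_pos ((y + x + 1 / 2) / 2)
        linarith
      · simp only [Vneg, Bool.false_eq_true, if_false]
        linarith
    · have hc : cost θ ((false, k, j), y) = 1 := by
        simp [cost, arm, muAmb, hθ, not_lt.mpr hθ]
      have hm : muAmb (arm ((false, k, j), y)) θ = -1 := by
        simp [arm, muAmb, hθ]
      rw [hc, hm, mul_assoc, ← Real.exp_add]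
      simp only [Vneg, Bool.false_eq_true, if_false]
      have he : (y + 1 / 2) / 2 + (-1 * (1 / 2) + (1 / 2) ^ 2 / 2) = y / 2 + (-(1 / 8)) := by
        ring
      rw [he, Real.exp_add]
      have h8 : Real.exp (-(1 / 8)) ≤ 8 / 9 := by
        rw [Real.exp_neg]
        have := Real.add_one_le_exp (1 / 8 : ℝ)
        rw [show (8 / 9 : ℝ) = (9 / 8)⁻¹ by norm_num]
        apply inv_anti₀ (by norm_num)
        linarith
      have hy1 : 1 ≤ Real.exp (y / 2) := Real.one_le_exp (by linarith)
      nlinarith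
  · have hj := h2 rfl
    refine ⟨9 * Real.exp 1 / (k + 1), 9 * Real.exp 1 * Real.exp (-lam k * (y + bb k) +
      lam k ^ 2 * (2 ^ k - (j + 1)) / 2), -lam k, by positivity,
      by positivity, fun x => ?_, ?_⟩
    · rw [mul_assoc (9 * Real.exp 1), ← Real.exp_add]
      simp only [step, if_true]
      split_ifs with h h'
      · simp only [Vneg, if_true]
        push_cast
        rw [add_comm]
        apply le_of_eq
        congr 3
        ring
      · have hj' : (j : ℝ) + 1 = 2 ^ k := by
          have : j + 1 = 2 ^ k := by omega
          exact_mod_cast this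
        simp only [Vneg, Bool.false_eq_true, if_false]
        rw [hj']
        have h0 : 0 ≤ -lam k * (y + bb k) + lam k ^ 2 * (2 ^ k - 2 ^ k) / 2 + -lam k * x := by
          have := mul_nonneg (lam_nonneg k) (show 0 ≤ -bb k - (y + x) by linarith)
          linarith
        have := Real.one_le_exp h0
        have hp := Real.exp_pos 1
        have h22 : Real.exp (2 / 2) = Real.exp 1 := by norm_num
        rw [h22]
        nlinarith
      · rw [Vneg_start _ (by omega), hst]
        have : 0 ≤ 9 * Real.exp 1 * Real.exp (-lam k * (y + bb k) +
          lam k ^ 2 * (2 ^ k - (j + 1)) / 2 + -lam k * x) := by positivity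
        linarith
    · have hc : cost θ ((true, k, j), y) = 0 := by
        simp [cost, arm, muAmb, hθ, not_lt.mpr hθ]
      have hm : muAmb (arm ((true, k, j), y)) θ = 0 := by
        simp [arm, muAmb, not_lt.mpr hθ]
      rw [hc, hm, mul_assoc (9 * Real.exp 1), ← Real.exp_add]
      simp only [Vneg, if_true]
      rw [zero_add, add_comm]
      apply le_of_eq
      congr 3
      ring

/-- Value of the start of phase `k` when `θ > 0`. -/
noncomputable def U (K k : ℕ) : ℝ := if k ≤ K then 4 * 2 ^ K - 2 ^ k else 3 * 2 ^ k

lemma U_nonneg (K k : ℕ) : 0 ≤ U K k := by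
  unfold U
  split_ifs with h
  · have : (2 : ℝ) ^ k ≤ 2 ^ K := pow_le_pow_right₀ (by norm_num) h
    have : (0 : ℝ) < 2 ^ K := by positivity
    linarith
  · positivity

lemma U_lt (K k : ℕ) (h : k < K) : 2 ^ k + U K (k + 1) = U K k := by
  unfold U
  rw [if_pos (by omega), if_pos (by omega), pow_succ]
  ring

lemma U_ge (K k : ℕ) (h : K ≤ k) : 2 ^ k + U K (k + 1) / 3 = U K k := by
  unfold U
  rw [if_neg (by omega), pow_succ]
  split_ifs with h'
  · have : k = K := by omega
    subst this
    ring
  · ring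

/-- Potential for `θ > 0`. -/
noncomputable def Vpos (K : ℕ) (θ : ℝ) (s : St) : ℝ :=
  if s.1.1 = true then
    θ * ((2 ^ s.1.2.1 - s.1.2.2) + U K (s.1.2.1 + 1) *
      (if s.1.2.1 < K then 1 else Real.exp (-2) + Real.exp (θ / 2 * (s.2 + bb s.1.2.1) +
        (2 ^ s.1.2.1 - s.1.2.2) * (-(3 * θ ^ 2 / 8)))))
  else θ * (Real.exp (-s.2) * U K (s.1.2.1 + 1))

lemma measurable_Vpos (K : ℕ) (θ : ℝ) : Measurable (Vpos K θ) := by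
  apply measurable_of_slices
  rintro ⟨m, k, j⟩
  by_cases hk : k < K <;> cases m <;> simp only [Vpos, hk] <;> norm_num <;> fun_prop

lemma Vpos_nonneg (K : ℕ) (θ : ℝ) (hθ : 0 < θ) (s : St) (hs : Inv s) : 0 ≤ Vpos K θ s := by
  obtain ⟨⟨m, k, j⟩, y⟩ := s
  obtain ⟨h1, h2, h3⟩ := hs
  simp only at h1 h2 h3
  have hU := U_nonneg K (k + 1)
  cases m
  · simp only [Vpos, Bool.false_eq_true, if_false]
    positivity
  · have hj : (j : ℝ) ≤ 2 ^ k := by exact_mod_cast (h2 rfl).le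
    have hj' : (0 : ℝ) ≤ 2 ^ k - j := by linarith
    simp only [Vpos, if_true]
    split_ifs <;> positivity

lemma exp_neg_two_le : Real.exp (-2) ≤ 1 / 6 := by
  have h1 := Real.exp_one_gt_d9
  have h2 : Real.exp 2 = Real.exp 1 * Real.exp 1 := by rw [← Real.exp_add]; norm_num
  rw [Real.exp_neg, one_div]
  apply inv_anti₀ (by norm_num)
  rw [h2]
  nlinarith

lemma Vpos_start (K : ℕ) (θ : ℝ) (hθ : 0 < θ) (hK2 : 2 ≤ K)
    (hK : ∀ k, K ≤ k → 8 * ell k ≤ 2 ^ k * θ ^ 2) (k : ℕ) :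
    Vpos K θ ((true, k, 0), 0) ≤ θ * U K k := by
  have hU := U_nonneg K (k + 1)
  simp only [Vpos, if_true]
  apply mul_le_mul_of_nonneg_left _ hθ.le
  split_ifs with h
  · rw [← U_lt K k h]
    simp
  · push Not at h
    rw [← U_ge K k h]
    have hb : bb k ≤ 2 ^ k * θ / 2 := by
      unfold bb
      apply Real.sqrt_le_iff.mpr
      refine ⟨by positivity, ?_⟩
      have := mul_le_mul_of_nonneg_left (hK k h) (show (0 : ℝ) ≤ 2 ^ k / 4 by positivity)
      nlinarith
    have he : θ / 2 * (0 + bb k) + (2 ^ k - ((0 : ℕ) : ℝ)) * (-(3 * θ ^ 2 / 8)) ≤ -ell k := by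
      have := mul_le_mul_of_nonneg_left hb (show 0 ≤ θ / 2 by positivity)
      have := hK k h
      push_cast
      nlinarith
    have hG := Real.exp_le_exp.mpr he
    rw [exp_neg_ell k (by omega)] at hG
    have h6 : 1 / ((k : ℝ) * (k + 1)) ≤ 1 / 6 := by
      have : (2 : ℝ) ≤ k := by exact_mod_cast hK2.trans h
      apply one_div_le_one_div_of_le (by norm_num)
      nlinarith
    have h2 := exp_neg_two_le
    have := mul_le_mul_of_nonneg_left (add_le_add h2 (hG.trans h6)) hU
    push_cast at this ⊢
    linarith

lemma Vpos_step (K : ℕ) (θ : ℝ) (hθ : 0 < θ) (hK2 : 2 ≤ K)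
    (hK : ∀ k, K ≤ k → 8 * ell k ≤ 2 ^ k * θ ^ 2) (s : St) (hs : Inv s) :
    ∃ A B l : ℝ, 0 ≤ A ∧ 0 ≤ B ∧
      (∀ x, Vpos K θ (step s x) ≤ A + B * Real.exp (l * x)) ∧
      cost θ s + (A + B * Real.exp (muAmb (arm s) θ * l + l ^ 2 / 2)) ≤ Vpos K θ s := by
  obtain ⟨⟨m, k, j⟩, y⟩ := s
  obtain ⟨h1, h2, h3⟩ := hs
  simp only at h1 h2 h3
  have hU := U_nonneg K (k + 1)
  have hstart := Vpos_start K θ hθ hK2 hK (k + 1)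
  have hθU : 0 ≤ θ * U K (k + 1) := by positivity
  cases m
  · refine ⟨0, θ * U K (k + 1) * Real.exp (-(y + 1 / 2)), -1, le_rfl, by positivity,
      fun x => ?_, ?_⟩
    · rw [mul_assoc (θ * U K (k + 1)), ← Real.exp_add]
      have he : -(y + 1 / 2) + -1 * x = -(y + x + 1 / 2) := by ring
      rw [he, zero_add]
      simp only [step, Bool.false_eq_true, if_false]
      split_ifs with h
      · refine hstart.trans ?_
        have : 1 ≤ Real.exp (-(y + x + 1 / 2)) := Real.one_le_exp (by linarith)
        nlinarith
      · simp only [Vpos, Bool.false_eq_true, if_false]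
        apply le_of_eq
        ring
    · have hc : cost θ ((false, k, j), y) = 0 := by
        simp [cost, arm, muAmb, hθ, not_le.mpr hθ, hθ.le]
      have hm : muAmb (arm ((false, k, j), y)) θ = 0 := by
        simp [arm, muAmb, not_le.mpr hθ]
      rw [hc, hm, mul_assoc (θ * U K (k + 1)), ← Real.exp_add]
      simp only [Vpos, Bool.false_eq_true, if_false]
      have he : -(y + 1 / 2) + (0 * -1 + (-1) ^ 2 / 2) = -y := by ring
      rw [he]
      apply le_of_eq
      ring
  · have hc : cost θ ((true, k, j), y) = θ := by
      simp [cost, arm, muAmb, hθ, not_le.mpr hθ, hθ.le]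
    have hm : muAmb (arm ((true, k, j), y)) θ = -θ := by
      simp [arm, muAmb, hθ]
    rw [hc, hm]
    have hj : (j : ℝ) + 1 ≤ 2 ^ k := by
      have := h2 rfl
      exact_mod_cast this
    have hj' : (0 : ℝ) ≤ 2 ^ k - (j + 1) := by linarith
    have hθj : 0 ≤ θ * (2 ^ k - (j + 1)) := by positivity
    by_cases hk : k < K
    · refine ⟨θ * (2 ^ k - (j + 1) + U K (k + 1)), 0, 0, by positivity, le_rfl,
        fun x => ?_, ?_⟩
      · rw [zero_mul, add_zero]
        simp only [step, if_true]
        split_ifs with h h'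
        · simp only [Vpos, if_true, hk]
          push_cast
          linarith
        · simp only [Vpos, Bool.false_eq_true, if_false]
          have := exp_neg_two_le
          nlinarith
        · refine hstart.trans ?_
          nlinarith
      · simp only [Vpos, if_true, hk]
        apply le_of_eq
        ring
    · refine ⟨θ * (2 ^ k - (j + 1) + U K (k + 1) * Real.exp (-2)), θ * U K (k + 1) *
        Real.exp (θ / 2 * (y + bb k) + (2 ^ k - (j + 1)) * (-(3 * θ ^ 2 / 8))), θ / 2,
        by positivity, by positivity, fun x => ?_, ?_⟩
      · rw [mul_assoc (θ * U K (k + 1)), ← Real.exp_add]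
        simp only [step, if_true]
        split_ifs with h h'
        · simp only [Vpos, if_true, hk, if_false]
          push_cast
          have he : θ / 2 * (y + bb k) + (2 ^ k - ((j : ℝ) + 1)) * (-(3 * θ ^ 2 / 8)) +
            θ / 2 * x = θ / 2 * (y + x + bb k) + (2 ^ k - ((j : ℝ) + 1)) *
              (-(3 * θ ^ 2 / 8)) := by ring
          rw [he]
          apply le_of_eq
          ring
        · simp only [Vpos, Bool.false_eq_true, if_false]
          have : 0 ≤ θ * U K (k + 1) * Real.exp (θ / 2 * (y + bb k) +
            (2 ^ k - (j + 1)) * (-(3 * θ ^ 2 / 8)) + θ / 2 * x) := by positivity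
          nlinarith
        · refine hstart.trans ?_
          have hj2 : (j : ℝ) + 1 = 2 ^ k := by
            have h4 := h2 rfl
            have : j + 1 = 2 ^ k := by omega
            exact_mod_cast this
          have h0 : 0 ≤ θ / 2 * (y + bb k) +
            (2 ^ k - ((j : ℝ) + 1)) * (-(3 * θ ^ 2 / 8)) + θ / 2 * x := by
            rw [hj2]
            have := mul_nonneg (show 0 ≤ θ / 2 by positivity)
              (show 0 ≤ y + x + bb k by linarith)
            linarith
          have h5 := mul_le_mul_of_nonneg_left (Real.one_le_exp h0) hθU
          have h6 : 0 ≤ θ * (2 ^ k - (j + 1) + U K (k + 1) * Real.exp (-2)) := by positivity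
          linarith
      · rw [mul_assoc (θ * U K (k + 1)), ← Real.exp_add]
        have he : θ / 2 * (y + bb k) + (2 ^ k - ((j : ℝ) + 1)) * (-(3 * θ ^ 2 / 8)) +
            (-θ * (θ / 2) + (θ / 2) ^ 2 / 2) =
            θ / 2 * (y + bb k) + (2 ^ k - (j : ℝ)) * (-(3 * θ ^ 2 / 8)) := by ring
        rw [he]
        simp only [Vpos, if_true, hk, if_false]
        apply le_of_eq
        ring

lemma ell_succ_le (k : ℕ) (hk : 2 ≤ k) : ell (k + 1) ≤ 2 * ell k := by
  have h : (2 : ℝ) ≤ k := by exact_mod_cast hk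
  unfold ell
  have : 2 * Real.log ((k : ℝ) * (k + 1)) = Real.log (((k : ℝ) * (k + 1)) ^ 2) := by
    rw [Real.log_pow]; norm_num
  rw [this]
  apply Real.log_le_log (by positivity)
  push_cast
  have h1 : (k : ℝ) + 2 ≤ k ^ 2 * (k + 1) := by nlinarith
  nlinarith

lemma exists_K (θ : ℝ) (hθ : 0 < θ) (hθ0 : θ ≤ Real.exp (-8)) :
    ∃ K : ℕ, 2 ≤ K ∧ (∀ k, K ≤ k → 8 * ell k ≤ 2 ^ k * θ ^ 2) ∧
      (2 : ℝ) ^ K ≤ 64 * Real.log (Real.log (1 / θ)) / θ ^ 2 := by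
  set l := Real.log (1 / θ) with hl
  have hl' : l = -Real.log θ := by rw [hl, one_div, Real.log_inv]
  have hl8 : 8 ≤ l := by
    have := Real.log_le_log hθ hθ0
    rw [Real.log_exp] at this
    linarith
  set L := Real.log l with hL
  have hL6 : Real.log 6 ≤ L := Real.log_le_log (by norm_num) (by linarith)
  have h16 : 1 ≤ Real.log 6 := by
    rw [Real.le_log_iff_exp_le (by norm_num)]
    have := Real.exp_one_lt_d9
    linarith
  have hL1 : 1 ≤ L := by linarith
  have hLl : L ≤ l := (Real.log_le_sub_one_of_pos (by linarith)).trans (by linarith)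
  have hθ1 : θ ≤ 1 := hθ0.trans (Real.exp_le_one_iff.mpr (by norm_num))
  have hX : 1 ≤ 32 * L / θ ^ 2 := by
    rw [le_div_iff₀ (by positivity)]
    nlinarith
  obtain ⟨n, hn1, hn2⟩ := exists_nat_pow_near hX (show (1 : ℝ) < 2 by norm_num)
  have hn4 : 1 ≤ n := by
    by_contra hn
    have : n = 0 := by omega
    subst this
    rw [div_lt_iff₀ (by positivity)] at hn2
    norm_num at hn2
    nlinarith
  have hup : (2 : ℝ) ^ (n + 1) ≤ 64 * L / θ ^ 2 := by
    rw [pow_succ]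
    have : 64 * L / θ ^ 2 = 32 * L / θ ^ 2 * 2 := by ring
    rw [this]
    linarith
  have hbase : 8 * ell (n + 1) ≤ 2 ^ (n + 1) * θ ^ 2 := by
    have hlow : 32 * L ≤ 2 ^ (n + 1) * θ ^ 2 := by
      rw [div_lt_iff₀ (by positivity)] at hn2
      exact hn2.le
    have hlog := Real.log_le_log (by positivity) hup
    rw [Real.log_pow, Real.log_div (by positivity) (by positivity),
      Real.log_mul (by norm_num) (by positivity), Real.log_pow] at hlog
    have h64 : Real.log 64 = 6 * Real.log 2 := by
      rw [show (64 : ℝ) = 2 ^ 6 by norm_num, Real.log_pow]; norm_num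
    have hlogL : Real.log L ≤ L := (Real.log_le_sub_one_of_pos (by linarith)).trans (by linarith)
    have h2a := Real.log_two_gt_d9
    push_cast at hlog
    have hn6 : (n : ℝ) + 2 ≤ 6 * l := by
      nlinarith
    have hln : Real.log ((n : ℝ) + 2) ≤ 2 * L := by
      have := Real.log_le_log (by positivity) hn6
      rw [Real.log_mul (by norm_num) (by positivity)] at this
      linarith
    have hell : ell (n + 1) ≤ 2 * Real.log ((n : ℝ) + 2) := by
      have : 2 * Real.log ((n : ℝ) + 2) = Real.log (((n : ℝ) + 2) ^ 2) := by
        rw [Real.log_pow]; norm_num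
      rw [this]
      unfold ell
      push_cast
      apply Real.log_le_log (by positivity)
      nlinarith [Nat.cast_nonneg (α := ℝ) n]
    linarith
  refine ⟨n + 1, by omega, fun k hk => ?_, hup⟩
  induction k, hk using Nat.le_induction with
  | base => exact hbase
  | succ k hk ih =>
    have := ell_succ_le k (by omega)
    rw [pow_succ]
    linarith

/-- **Theorem 8.** For the two-armed structured bandit with `Θ = [−1,1]`,
`μ₁(θ) = −θ·1{θ > 0}`, `μ₂(θ) = −1{θ ≤ 0}` and unit-variance normal rewards, there is an
algorithm and a constant `C > 0` such that, uniformly in `n`: `E_θ R_n(θ) ≤ C` for all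
`θ ∈ [−1,0]`, and `E_θ R_n(θ) ≤ C·(1/θ)·log log(1/θ)` for all small enough `θ > 0`. -/
theorem finite_regret_ambiguous_example :
    ∃ alg : Alg, ∀ P : ℝ → Measure Traj, IsEnv muAmb alg P →
      ∃ C > (0 : ℝ), ∃ θ₀ > (0 : ℝ),
        (∀ θ : ℝ, 0 < θ → θ ≤ θ₀ → ∀ n : ℕ,
          expRegret muAmb alg P θ n ≤ C * (1 / θ) * Real.log (Real.log (1 / θ))) ∧
        (∀ θ : ℝ, -1 ≤ θ → θ ≤ 0 → ∀ n : ℕ,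
          expRegret muAmb alg P θ n ≤ C) := by
  refine ⟨theAlg, fun P hP => ⟨256, by norm_num, Real.exp (-8), Real.exp_pos _, ?_, ?_⟩⟩
  · intro θ hθ hθ0 n
    obtain ⟨K, hK2, hK, hup⟩ := exists_K θ hθ hθ0
    refine (lyapunov hP θ (Vpos K θ) (measurable_Vpos K θ) (Vpos_nonneg K θ hθ)
      (Vpos_step K θ hθ hK2 hK) n).trans ?_
    refine (Vpos_start K θ hθ hK2 hK 1).trans ?_
    have hU : U K 1 ≤ 4 * 2 ^ K := by
      unfold U
      rw [if_pos (by omega)]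
      norm_num
    have h1 : U K 1 ≤ 4 * (64 * Real.log (Real.log (1 / θ)) / θ ^ 2) := by linarith
    refine (mul_le_mul_of_nonneg_left h1 hθ.le).trans (le_of_eq ?_)
    generalize Real.log (Real.log (1 / θ)) = z
    field_simp
    ring
  · intro θ _ hθ n
    refine (lyapunov hP θ Vneg measurable_Vneg (fun s _ => Vneg_nonneg s)
      (Vneg_step θ hθ) n).trans ?_
    rw [initSt, Vneg_start 1 le_rfl]
    have := Real.exp_one_lt_d9
    norm_num
    linarith

end TwoArmedBandit
end
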